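/- Let 𝒩 be a network architecture whose buffer structure satisfies the buffer axioms B1–B8. Then every 𝒩-channel-compliant finite word w such that w ≡_𝒫 split(ρ) for some synchronous word ρ is 𝒩-channel-matched, i.e., it reaches the initial (all-empty) channel state (channel compliance fact CC4). -/

import Mathlib

/-!
Equality under local projection with `split ρ` forces `w` to be a permutation of `split ρ`
(`equivP.perm`), because every event has exactly one active participant. Hence, on each channel
separately, every message is inserted as often as it is removed (`balanced_opsOn`).

It remains to see that a balanced sequence of buffer operations that is defined on the empty
buffer leads back to the empty buffer (`applySeq_balanced`). By B3 such a sequence, if non-empty,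
starts with some `insert m`, and by balance it has the form `insert m, σ, remove m, τ` with no
`remove m` in `σ`. Since `remove m` is undefined on the empty buffer, B8 lets one cancel this pair:
the sequence `σ, τ` has the same result. It is balanced and shorter, so induction on the length
applies.
-/



/-- Operations on a buffer: insert or remove a message. -/
inductive BOp (M : Type) where
  | ins (m : M)
  | rem (m : M)

/-- Apply a single buffer operation. -/
def applyOp {M B : Type} (ins rem : M → B → Option B) : BOp M → B → Option B
  | .ins m, b => ins m b
  | .rem m, b => rem m b

/-- Apply a finite sequence of buffer operations, left to right. -/
def applySeq {M B : Type} (ins rem : M → B → Option B) : List (BOp M) → B → Option B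
  | [], b => some b
  | op :: σ, b => (applyOp ins rem op b).bind (applySeq ins rem σ)

/-- The eight buffer axioms B1–B8 for a buffer structure with contents `B`,
partial operations `ins`, `rem` and empty buffer `b0`. -/
structure BufferAxioms (M B : Type) (ins rem : M → B → Option B) (b0 : B) : Prop where
  b1 : ∀ (m : M) (b : B), (ins m b).isSome
  b2 : ∀ m : M, ((ins m b0).bind (rem m)).isSome
  b3 : ∀ m : M, rem m b0 = none
  b4 : ∀ (m m' : M) (b : B), (rem m b).isSome → ((ins m' b).bind (rem m)).isSome
  b5 : ∀ (m : M) (b : B) (σ : List (BOp M)), BOp.rem m ∉ σ →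
        ((ins m b).bind (applySeq ins rem σ)).isSome → (applySeq ins rem σ b).isSome
  b6 : ∀ (m : M) (b : B), (rem m b).isSome →
        (ins m b).bind (rem m) = (rem m b).bind (ins m)
  b7 : ∀ (m m' : M) (b : B), m ≠ m' →
        (ins m b).bind (rem m') = (rem m' b).bind (ins m)
  b8 : ∀ (m : M) (b : B) (σ : List (BOp M)), rem m b = none → BOp.rem m ∉ σ →
        (((ins m b).bind (applySeq ins rem σ)).bind (rem m)).isSome →
        ((ins m b).bind (applySeq ins rem σ)).bind (rem m) = applySeq ins rem σ b

/-- Asynchronous events: send events `p▷q!v` and receive events `p▷q?v`. -/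
inductive Event (P V : Type) where
  | send (p q : P) (v : V)
  | recv (p q : P) (v : V)
deriving DecidableEq

/-- The active participant of an event: the sender of a send, the receiver of a receive. -/
def Event.active {P V : Type} : Event P V → P
  | .send p _ _ => p
  | .recv _ q _ => q

/-- A network architecture: channels `C`, buffer contents `B`, a channel map,
partial insert/remove operations, and an empty buffer. -/
structure NetArch (P V C B : Type) where
  chan : P → P → C
  insert : P × P × V → B → Option B
  remove : P × P × V → B → Option B
  b0 : B

variable {P V C B : Type}

/-- Executing a single event on a channel state. -/
def NetArch.step [DecidableEq C] (N : NetArch P V C B) :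
    Event P V → (C → B) → Option (C → B)
  | .send p q v, ξ => (N.insert (p, q, v) (ξ (N.chan p q))).map (Function.update ξ (N.chan p q))
  | .recv p q v, ξ => (N.remove (p, q, v) (ξ (N.chan p q))).map (Function.update ξ (N.chan p q))

/-- Executing a finite word of events from a channel state. -/
def NetArch.runFrom [DecidableEq C] (N : NetArch P V C B) :
    List (Event P V) → (C → B) → Option (C → B)
  | [], ξ => some ξ
  | e :: w, ξ => (N.step e ξ).bind (N.runFrom w)

/-- The initial channel state: every channel holds the empty buffer. -/
def NetArch.init (N : NetArch P V C B) : C → B := fun _ => N.b0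

/-- A finite word is channel-compliant if executing it from the initial channel
state is defined at every step. -/
def NetArch.compliant [DecidableEq C] (N : NetArch P V C B) (w : List (Event P V)) : Prop :=
  (N.runFrom w N.init).isSome

/-- A finite word is channel-matched if it is channel-compliant and reaches the
initial (all-empty) channel state. -/
def NetArch.matched [DecidableEq C] (N : NetArch P V C B) (w : List (Event P V)) : Prop :=
  N.runFrom w N.init = some N.init

/-- Projection of a word onto the events in which participant `r` is active. -/
def proj [DecidableEq P] (r : P) (w : List (Event P V)) : List (Event P V) :=
  w.filter (fun e => decide (e.active = r))

/-- Equality under local projection. -/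
def equivP [DecidableEq P] (w₁ w₂ : List (Event P V)) : Prop :=
  ∀ r : P, proj r w₁ = proj r w₂

/-- `split` replaces every synchronous message exchange `(p,q,v)` by the two
consecutive asynchronous events `p▷q!v · p▷q?v`. -/
def split : List (P × P × V) → List (Event P V)
  | [] => []
  | m :: ρ => Event.send m.1 m.2.1 m.2.2 :: Event.recv m.1 m.2.1 m.2.2 :: split ρ

section CC4

open Classical in
/-- A sequence of buffer operations in which each message is inserted as often as it is removed. -/
def OpsBalanced {M : Type} (σ : List (BOp M)) : Prop :=
  ∀ m : M, σ.count (BOp.ins m) = σ.count (BOp.rem m)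

theorem OpsBalanced.perm {M : Type} {σ τ : List (BOp M)} (h : σ.Perm τ) (hτ : OpsBalanced τ) :
    OpsBalanced σ := by
  classical
  intro m
  rw [h.count_eq, h.count_eq]
  convert hτ m

theorem applySeq_append {M A : Type} (ins rem : M → A → Option A) (σ τ : List (BOp M)) (b : A) :
    applySeq ins rem (σ ++ τ) b = (applySeq ins rem σ b).bind (applySeq ins rem τ) := by
  induction σ generalizing b with
  | nil => rfl
  | cons op σ ih =>
    simp only [List.cons_append, applySeq, Option.bind_assoc]
    congr 1
    funext b'
    exact ih b'

/-- A balanced sequence that is defined on the empty buffer returns to the empty buffer: by B8 the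
first insertion cancels against the first removal of the same message. -/
theorem applySeq_balanced {M A : Type} {ins rem : M → A → Option A} {b₀ : A}
    (hB : BufferAxioms M A ins rem b₀) (n : ℕ) :
    ∀ (σ : List (BOp M)), σ.length ≤ n → OpsBalanced σ → ∀ b, applySeq ins rem σ b₀ = some b →
      b = b₀ := by
  classical
  induction n with
  | zero =>
    intro σ hσ _ b hb
    obtain rfl : σ = [] := by simpa using hσ
    simpa [applySeq] using hb.symm
  | succ n ih =>
    intro σ hσ hbal b hb
    rcases σ with _ | ⟨_ | m, σ⟩
    · simpa [applySeq] using hb.symm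
    · rename_i m
      have hmem : BOp.rem m ∈ σ := by
        have h := hbal m
        have h' : σ.count (BOp.ins m) + 1 = σ.count (BOp.rem m) := by
          simpa [List.count_cons] using h
        exact List.count_pos_iff.mp (by omega)
      obtain ⟨α, τ, rfl, hα⟩ := List.eq_append_cons_of_mem hmem
      have hrun : (((ins m b₀).bind (applySeq ins rem α)).bind (rem m)).bind
          (applySeq ins rem τ) = some b := by
        rw [← hb]
        simp only [applySeq, applyOp, Option.bind_assoc]
        congr 1
        funext b'
        rw [applySeq_append]
        rfl
      have hsome : (((ins m b₀).bind (applySeq ins rem α)).bind (rem m)).isSome := by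
        obtain ⟨b', hb', _⟩ := Option.bind_eq_some_iff.mp hrun
        simp [hb']
      rw [hB.b8 m b₀ α (hB.b3 m) hα hsome, ← applySeq_append] at hrun
      refine ih (α ++ τ) ?_ ?_ b hrun
      · simp only [List.length_cons, List.length_append] at hσ ⊢
        omega
      · intro m'
        have h := hbal m'
        simp only [List.count_cons, List.count_append] at h ⊢
        by_cases hm : m = m' <;> simp [hm] at h ⊢ <;> omega
    · simp [applySeq, applyOp, hB.b3] at hb

/-- The buffer operation an event performs on channel `c`, or `none` if it uses another channel. -/
def NetArch.opOn {P V C B : Type} [DecidableEq C] (N : NetArch P V C B) (c : C) :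
    Event P V → Option (BOp (P × P × V))
  | .send p q v => if N.chan p q = c then some (.ins (p, q, v)) else none
  | .recv p q v => if N.chan p q = c then some (.rem (p, q, v)) else none

theorem NetArch.applySeq_of_runFrom {P V C B : Type} [DecidableEq C] (N : NetArch P V C B) (c : C)
    (w : List (Event P V)) (ξ ξ' : C → B) (h : N.runFrom w ξ = some ξ') :
    applySeq N.insert N.remove (w.filterMap (N.opOn c)) (ξ c) = some (ξ' c) := by
  induction w generalizing ξ with
  | nil =>
    obtain rfl : ξ = ξ' := by simpa [NetArch.runFrom] using h
    rfl
  | cons e w ih =>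
    obtain ⟨ζ, hζ, hrun⟩ := Option.bind_eq_some_iff.mp h
    have hw := ih ζ hrun
    cases e <;>
    · rename_i p q v
      obtain ⟨b, hb, rfl⟩ := Option.map_eq_some_iff.mp hζ
      by_cases hc : N.chan p q = c
      · subst hc
        simpa [NetArch.opOn, applySeq, applyOp, hb] using hw
      · simpa [NetArch.opOn, hc, Function.update_of_ne (Ne.symm hc)] using hw

theorem NetArch.balanced_opsOn {P V C B : Type} [DecidableEq C] (N : NetArch P V C B) (c : C)
    (ρ : List (P × P × V)) : OpsBalanced ((split ρ).filterMap (N.opOn c)) := by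
  classical
  intro m
  induction ρ with
  | nil => simp [split]
  | cons a ρ ih =>
    by_cases hc : N.chan a.1 a.2.1 = c
    · simp [split, NetArch.opOn, hc, List.count_cons, ih]
    · simpa [split, NetArch.opOn, hc] using ih

/-- All occurrences of an event are visible in the projection onto its active participant, so
projection-equal words contain each event equally often. -/
theorem equivP.perm {P V : Type} [DecidableEq P] {w₁ w₂ : List (Event P V)}
    (h : equivP w₁ w₂) : w₁.Perm w₂ := by
  classical
  rw [List.perm_iff_count]
  intro e
  have hcount : ∀ w : List (Event P V), (proj e.active w).count e = w.count e := fun w =>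
    List.count_filter (by simp)
  rw [← hcount w₁, ← hcount w₂, h e.active]

end CC4

/-- CC4: for a network architecture satisfying the buffer axioms B1–B8, every
channel-compliant word that is equal under local projection to `split ρ` for
some synchronous word ρ is channel-matched. -/
theorem cc4_sync_matched {P V C B : Type}
    [DecidableEq P] [DecidableEq C] (N : NetArch P V C B)
    (hN : BufferAxioms (P × P × V) B N.insert N.remove N.b0)
    (w : List (Event P V)) (hw : N.compliant w)
    (ρ : List (P × P × V)) (hρ : ∀ m ∈ ρ, m.1 ≠ m.2.1)
    (heq : equivP w (split ρ)) :
    N.matched w := by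
  obtain ⟨ξ, hξ⟩ := Option.isSome_iff_exists.mp hw
  unfold NetArch.matched
  rw [hξ]
  congr 1
  funext c
  exact applySeq_balanced hN _ _ le_rfl
    ((N.balanced_opsOn c ρ).perm (heq.perm.filterMap _)) _ (N.applySeq_of_runFrom c w _ _ hξ)
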